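/- For every n ≥ 1 and every k with 1 ≤ k ≤ n, the number of even permutations of [n] with exactly k right-to-left minima minus the number of odd permutations of [n] with exactly k right-to-left minima equals (-1)^{n-k} · C(⌊n/2⌋, k - ⌈n/2⌉), where C denotes the binomial coefficient (equal to 0 when k - ⌈n/2⌉ is negative or exceeds ⌊n/2⌋). -/

import Mathlib

open Finset MvPolynomial

/-- Number of inversions of a permutation of `Fin n`
(pairs `p.1 < p.2` with `π p.1 > π p.2`). -/
def inversions {n : ℕ} (π : Equiv.Perm (Fin n)) : ℕ :=
  (Finset.univ.filter fun p : Fin n × Fin n => p.1 < p.2 ∧ π p.2 < π p.1).card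

/-- Excedance indices of a permutation. -/
def EXCi {n : ℕ} (π : Equiv.Perm (Fin n)) : Finset (Fin n) :=
  Finset.univ.filter fun i => i < π i

/-- Excedance values of a permutation. -/
def EXCv {n : ℕ} (π : Equiv.Perm (Fin n)) : Finset (Fin n) :=
  (EXCi π).image π

/-- Right-to-left minima indices of a permutation. -/
def RLMi {n : ℕ} (π : Equiv.Perm (Fin n)) : Finset (Fin n) :=
  Finset.univ.filter fun i => ∀ j, i < j → π i < π j

/-- Right-to-left minima values of a permutation. -/
def RLMv {n : ℕ} (π : Equiv.Perm (Fin n)) : Finset (Fin n) :=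
  (RLMi π).image π

/-- The derangements of `Fin n`, i.e. permutations with no fixed point. -/
def derangementsF (n : ℕ) : Finset (Equiv.Perm (Fin n)) :=
  Finset.univ.filter fun π => ∀ i, π i ≠ i

/- Deleting the first entry of a permutation of `[n + 1]` and standardizing the rest gives a
permutation of `[n]`. A first entry with `p` smaller values after it contributes `p` inversions,
and is a right-to-left minimum exactly when `p = 0`. Hence `∑ q ^ inv * x ^ rlm` is the product
over `i < n` of `x + q + ⋯ + q ^ i`. At `q = -1` these factors alternate between `x` and `x - 1`,
so the signed sum is `x ^ ⌈n/2⌉ * (x - 1) ^ ⌊n/2⌋`, and the coefficient of `x ^ k` is the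
claimed difference. -/

section ConsPerm

variable {n : ℕ}

/-- The permutation of `Fin (n + 1)` whose first entry is `p` and whose remaining entries, in order,
form the pattern `e`: in one-line notation, the entries of `e` that are at least `p` are raised by
one and `p` is put in front. It serves to build permutations one entry at a time. The encoding
composes `0, e 0 + 1, e 1 + 1, …` with the cycle that sends `0` to `p` and `i + 1` to
`p.succAbove i`. -/
def consPerm (p : Fin (n + 1)) (e : Equiv.Perm (Fin n)) : Equiv.Perm (Fin (n + 1)) :=
  p.cycleRange⁻¹ * Equiv.Perm.decomposeFin.symm (0, e)

@[simp]
lemma consPerm_zero (p : Fin (n + 1)) (e : Equiv.Perm (Fin n)) : consPerm p e 0 = p := by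
  simp [consPerm, Equiv.Perm.inv_def]

@[simp]
lemma consPerm_succ (p : Fin (n + 1)) (e : Equiv.Perm (Fin n)) (i : Fin n) :
    consPerm p e i.succ = p.succAbove (e i) := by
  simp [consPerm, Equiv.Perm.inv_def]

lemma consPerm_injective2 : Function.Injective2 (consPerm (n := n)) := by
  intro p q e f h
  obtain rfl : p = q := by simpa using DFunLike.congr_fun h 0
  simpa [consPerm] using h

lemma consPerm_uncurry_bijective : Function.Bijective (Function.uncurry (consPerm (n := n))) :=
  (Fintype.bijective_iff_injective_and_card _).2
    ⟨consPerm_injective2.uncurry, by simp [Fintype.card_perm, Nat.factorial_succ]⟩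

lemma sum_perm_fin_succ {M : Type*} [AddCommMonoid M] (f : Equiv.Perm (Fin (n + 1)) → M) :
    ∑ π, f π = ∑ p, ∑ e, f (consPerm p e) := by
  rw [← consPerm_uncurry_bijective.sum_comp, Fintype.sum_prod_type]
  rfl

lemma card_filter_succAbove_perm_lt (p : Fin (n + 1)) (e : Equiv.Perm (Fin n)) :
    #{i | p.succAbove (e i) < p} = p := by
  calc #{i | p.succAbove (e i) < p}
      = #{i : Fin n | (i : ℕ) < p} := card_equiv e fun i => by
        simp only [mem_filter_univ, Fin.succAbove_lt_iff_castSucc_lt]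
        rfl
    _ = p := by rw [Fin.card_filter_val_lt, min_eq_right p.is_le]

lemma forall_lt_succAbove_perm_iff {p : Fin (n + 1)} {e : Equiv.Perm (Fin n)} :
    (∀ i, p < p.succAbove (e i)) ↔ p = 0 := by
  refine ⟨fun h => ?_, by rintro rfl i; simp⟩
  by_contra hp
  obtain ⟨j, hj⟩ := Fin.exists_succAbove_eq (Ne.symm hp)
  simpa [hj] using h (e.symm j)

lemma inversions_eq_sum (π : Equiv.Perm (Fin n)) :
    inversions π = ∑ i, #{j | i < j ∧ π j < π i} := by
  simp only [inversions, card_filter, Fintype.sum_prod_type]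

lemma inversions_consPerm (p : Fin (n + 1)) (e : Equiv.Perm (Fin n)) :
    inversions (consPerm p e) = p + inversions e := by
  simp [inversions_eq_sum, Fin.sum_univ_succ, Fin.card_filter_univ_succ,
    card_filter_succAbove_perm_lt]

lemma zero_mem_RLMi_consPerm {p : Fin (n + 1)} {e : Equiv.Perm (Fin n)} :
    0 ∈ RLMi (consPerm p e) ↔ p = 0 := by
  simp [RLMi, Fin.forall_fin_succ, forall_lt_succAbove_perm_iff]

lemma succ_mem_RLMi_consPerm {p : Fin (n + 1)} {e : Equiv.Perm (Fin n)} {i : Fin n} :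
    i.succ ∈ RLMi (consPerm p e) ↔ i ∈ RLMi e := by
  simp [RLMi, Fin.forall_fin_succ]

lemma card_RLMi_consPerm (p : Fin (n + 1)) (e : Equiv.Perm (Fin n)) :
    #(RLMi (consPerm p e)) = #(RLMi e) + if p = 0 then 1 else 0 := by
  calc #(RLMi (consPerm p e))
      = #{i | i ∈ RLMi (consPerm p e)} := by rw [filter_univ_mem]
    _ = #(RLMi e) + if p = 0 then 1 else 0 := by
        rw [Fin.card_filter_univ_succ]
        simp only [zero_mem_RLMi_consPerm, succ_mem_RLMi_consPerm, filter_univ_mem]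
        split_ifs <;> rfl

end ConsPerm

lemma sum_pow_inversions_mul_pow_card_RLMi {R : Type*} [CommSemiring R] (q x : R) (n : ℕ) :
    ∑ π : Equiv.Perm (Fin n), q ^ inversions π * x ^ #(RLMi π) =
      ∏ i ∈ range n, (x + q * ∑ j ∈ range i, q ^ j) := by
  induction n with
  | zero => simp [inversions, RLMi]
  | succ n ih =>
    have first_entry (p : Fin (n + 1)) :
        ∑ e, q ^ inversions (consPerm p e) * x ^ #(RLMi (consPerm p e)) =
          (∑ e : Equiv.Perm (Fin n), q ^ inversions e * x ^ #(RLMi e)) *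
            (q ^ (p : ℕ) * x ^ (if p = 0 then 1 else 0)) := by
      simp only [inversions_consPerm, card_RLMi_consPerm, pow_add, sum_mul]
      exact sum_congr rfl fun e _ => by ring
    have first_entry_weights :
        ∑ p : Fin (n + 1), q ^ (p : ℕ) * x ^ (if p = 0 then 1 else 0) =
          x + q * ∑ j ∈ range n, q ^ j := by
      simp [Fin.sum_univ_succ, mul_sum, pow_succ', sum_range]
    simp only [sum_perm_fin_succ, first_entry, ← mul_sum, first_entry_weights, ih,
      prod_range_succ]

lemma prod_range_ite_even {M : Type*} [CommMonoid M] (a b : M) (n : ℕ) :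
    (∏ i ∈ range n, if Even i then a else b) = a ^ ((n + 1) / 2) * b ^ (n / 2) := by
  induction n with
  | zero => simp
  | succ n ih =>
    rw [prod_range_succ, ih]
    obtain ⟨m, rfl | rfl⟩ := n.even_or_odd'
    · have half : (2 * m + 1) / 2 = m := by omega
      have half_succ : (2 * m + 1 + 1) / 2 = m + 1 := by omega
      simp [half, half_succ, pow_succ, mul_right_comm]
    · have half : (2 * m + 1) / 2 = m := by omega
      have half_succ : (2 * m + 1 + 1) / 2 = m + 1 := by omega
      have half_add_two : (2 * m + 1 + 1 + 1) / 2 = m + 1 := by omega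
      simp [half, half_succ, half_add_two, pow_succ, mul_assoc]

lemma sum_neg_one_pow_inversions_mul_pow_card_RLMi {R : Type*} [CommRing R] (x : R) (n : ℕ) :
    ∑ π : Equiv.Perm (Fin n), (-1) ^ inversions π * x ^ #(RLMi π) =
      x ^ ((n + 1) / 2) * (x - 1) ^ (n / 2) := by
  have factor (i : ℕ) :
      x + -1 * ∑ j ∈ range i, (-1) ^ j = if Even i then x else x - 1 := by
    rw [neg_one_geom_sum]
    split_ifs <;> ring
  simp only [sum_pow_inversions_mul_pow_card_RLMi, factor, prod_range_ite_even]

lemma card_even_sub_card_not_even {ι R : Type*} [Ring R] (s : Finset ι) (f : ι → ℕ) :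
    (#{i ∈ s | Even (f i)} : R) - #{i ∈ s | ¬Even (f i)} = ∑ i ∈ s, (-1) ^ f i := by
  simp only [neg_one_pow_eq_ite, sum_ite, sum_const, nsmul_eq_mul, mul_one, mul_neg, sub_eq_add_neg]

lemma coeff_sum_C_mul_X_pow {ι R : Type*} [Semiring R] (s : Finset ι) (w : ι → R) (d : ι → ℕ)
    (k : ℕ) :
    (∑ i ∈ s, Polynomial.C (w i) * Polynomial.X ^ d i).coeff k = ∑ i ∈ s with d i = k, w i := by
  simp only [Polynomial.finsetSum_coeff, Polynomial.coeff_C_mul_X_pow, sum_filter, eq_comm]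

lemma coeff_X_pow_mul_X_sub_one_pow {R : Type*} [CommRing R] (a b k : ℕ) :
    ((Polynomial.X : Polynomial R) ^ a * (Polynomial.X - 1) ^ b).coeff k =
      if a ≤ k then (-1) ^ (a + b - k) * (b.choose (k - a) : R) else 0 := by
  have X_sub_one : (Polynomial.X - 1 : Polynomial R) = Polynomial.X + Polynomial.C (-1) := by
    simp [sub_eq_add_neg]
  rw [Polynomial.coeff_X_pow_mul', X_sub_one, Polynomial.coeff_X_add_C_pow]
  refine if_ctx_congr Iff.rfl (fun hak => ?_) fun _ => rfl
  rw [show b - (k - a) = a + b - k by omega]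

theorem stmt12 (n k : ℕ) (hn : 1 ≤ n) (hk1 : 1 ≤ k) (hk2 : k ≤ n) :
    ((Finset.univ.filter
        (fun π : Equiv.Perm (Fin n) => Even (inversions π) ∧ (RLMi π).card = k)).card : ℤ)
      - ((Finset.univ.filter
          (fun π : Equiv.Perm (Fin n) => ¬ Even (inversions π) ∧ (RLMi π).card = k)).card : ℤ)
    = (-1) ^ (n - k) *
        (if (n + 1) / 2 ≤ k then ((n / 2).choose (k - (n + 1) / 2) : ℤ) else 0) := by
  have signed_count :
      ∑ π : Equiv.Perm (Fin n) with #(RLMi π) = k, (-1 : ℤ) ^ inversions π =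
        ((Polynomial.X : Polynomial ℤ) ^ ((n + 1) / 2) * (Polynomial.X - 1) ^ (n / 2)).coeff k := by
    rw [← sum_neg_one_pow_inversions_mul_pow_card_RLMi, ← coeff_sum_C_mul_X_pow]
    simp only [map_pow, map_neg, map_one]
  have halves : (n + 1) / 2 + n / 2 = n := by omega
  simp only [and_comm (b := #(RLMi _) = k), ← filter_filter]
  rw [card_even_sub_card_not_even, signed_count, coeff_X_pow_mul_X_sub_one_pow, halves, mul_ite,
    mul_zero]
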